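/- Let n be an odd integer with n ≥ 3, let σ^n be an n-simplex in Euclidean space, and let τ^p be a p-face of σ^n, where p is an even integer with 0 ≤ p ≤ n−2. Then Σ_{i=p+1}^{n} (−1)^{i−p+1} Σ_{σ^n ≻ η^i ≻ τ^p} α(η^i, σ^n) = 2·α(τ^p, σ^n), where the inner sum is over all i-faces η^i of σ^n that have τ^p as a face (including, for i = n, the simplex σ^n itself). -/

import Mathlib

open Filter MeasureTheory Geometry
open scoped BigOperators

noncomputable section

attribute [local instance 0] Classical.propDecidable

namespace AngleDefectPaper

/-- `N`-dimensional Euclidean space. -/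
abbrev Euc (N : ℕ) : Type := EuclideanSpace ℝ (Fin N)

variable {N : ℕ}

/-- The open simplex determined by a finite set of points: the intrinsic
(relative) interior of its convex hull. -/
def openSimplex (s : Finset (Euc N)) : Set (Euc N) :=
  intrinsicInterior ℝ (convexHull ℝ (s : Set (Euc N)))

/-- The normalized solid angle `α(η, σ)` of the simplex `σ` along its face `η`:
the fraction of a small sphere (in the affine span of `σ`) centered at a point of
the open face `η` that lies in `σ`, normalized so that the full sphere has
measure `1`.  It is computed as the limiting fraction of a small ambient ball
centered at the centroid of `η` that lies in the cylinder obtained by thickening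
`σ` in the directions orthogonal to its affine span. -/
def solidAngle (η σ : Finset (Euc N)) : ℝ :=
  limUnder (nhdsWithin (0 : ℝ) (Set.Ioi 0)) fun ε =>
    (volume (Metric.ball (η.centroid ℝ id) ε ∩
      {y : Euc N | ∃ c ∈ convexHull ℝ (σ : Set (Euc N)),
        ∃ w ∈ (vectorSpan ℝ (σ : Set (Euc N)))ᗮ, y = c + w})).toReal /
    (volume (Metric.ball (η.centroid ℝ id) ε)).toReal

/-- `Tcone r` is (a realization in the plane of) the open cone on `r` points:
`r` half-open segments emanating from the origin in pairwise distinct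
directions, glued at the origin.  For `r = 0` it is a single point. -/
def Tcone (r : ℕ) : Set (ℝ × ℝ) :=
  {0} ∪ ⋃ k ∈ Finset.range r,
    {p : ℝ × ℝ | ∃ t : ℝ, 0 ≤ t ∧ t < 1 ∧ p = t • ((1 : ℝ), (k : ℝ))}

/-- `x` has a neighborhood in `S` homeomorphic to `T_r × ℝ^{n-1}`, with the
homeomorphism taking `x` into the apex set `{cone point} × ℝ^{n-1}`. -/
def HasConeNbhd (n r : ℕ) (S : Set (Euc N)) (x : Euc N) : Prop :=
  ∃ U : Set (Euc N), U ∈ nhdsWithin x S ∧ U ⊆ S ∧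
    ∃ h : U ≃ₜ (Tcone r) × EuclideanSpace ℝ (Fin (n - 1)),
      ∀ hx : x ∈ U, ((h ⟨x, hx⟩).1 : ℝ × ℝ) = 0

/-- The set of points of `|K|` having a neighborhood of cone type `r`. -/
def csetAux (n : ℕ) (K : SimplicialComplex ℝ (Euc N)) (r : ℕ) : Set (Euc N) :=
  {x | x ∈ K.space ∧ HasConeNbhd n r K.space x}

/-- The sets `C_r(K)`: for `r ≠ 2` the points with a cone-type-`r` neighborhood,
and `C_2(K)` is the complement in `|K|` of the union of the others. -/
def cset (n : ℕ) (K : SimplicialComplex ℝ (Euc N)) (r : ℕ) : Set (Euc N) :=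
  if r = 2 then K.space \ ⋃ r' ∈ {r' : ℕ | r' ≠ 2}, csetAux n K r'
  else csetAux n K r

/-- The stratification rank `r(η) = r/2`, where `C_r(K)` is the (unique) set of
the stratification containing the open simplex of `η`. -/
def strRank (n : ℕ) (K : SimplicialComplex ℝ (Euc N)) (η : Finset (Euc N)) : ℝ :=
  if h : ∃ r : ℕ, r ≠ 2 ∧ openSimplex η ⊆ csetAux n K r then (h.choose : ℝ) / 2
  else 1

/-- The set of `n`-simplices of `K` having `η` as a face. -/
def nSimplicesOn (n : ℕ) (K : SimplicialComplex ℝ (Euc N)) (η : Finset (Euc N)) :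
    Set (Finset (Euc N)) :=
  {σ | σ ∈ K.faces ∧ σ.card = n + 1 ∧ η ⊆ σ}

/-- The generalized angle defect `D(η) = r(η) - Σ_{σⁿ ≻ η} α(η, σⁿ)`. -/
def defect (n : ℕ) (K : SimplicialComplex ℝ (Euc N)) (η : Finset (Euc N)) : ℝ :=
  strRank n K η - ∑ᶠ σ ∈ nSimplicesOn n K η, solidAngle η σ

/-- The angle defect sequence `a_m = 4 B_{m+2} (2^{m+2} - 1)/(m+2)`, where `B_k`
is the `k`-th Bernoulli number (with the convention `B_1 = -1/2`). -/
def ads (m : ℕ) : ℚ :=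
  4 * bernoulli (m + 2) * (2 ^ (m + 2) - 1) / (m + 2)

/-- The ascending stratified curvature of a simplex `τ` (of dimension
`p = τ.card - 1`) in the `n`-dimensional complex `K`. -/
def asc (n : ℕ) (K : SimplicialComplex ℝ (Euc N)) (τ : Finset (Euc N)) : ℝ :=
  (ads (τ.card - 1) : ℝ) * defect n K τ +
    (ads (τ.card - 1) : ℝ) / 2 *
      ∑ i ∈ Finset.Icc τ.card n,
        (-1 : ℝ) ^ (i - (τ.card - 1)) *
          ∑ᶠ η ∈ {η : Finset (Euc N) | η ∈ K.faces ∧ η.card = i + 1 ∧ τ ⊆ η},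
            defect n K η

/-- The stratified Euler characteristic `χˢ(K) = Σ_{η ∈ K} r(η) (-1)^{dim η}`. -/
def stratEuler (n : ℕ) (K : SimplicialComplex ℝ (Euc N)) : ℝ :=
  ∑ᶠ η ∈ K.faces, strRank n K η * (-1 : ℝ) ^ (η.card - 1)

/-- `fcount F k` is the number of `k`-dimensional simplices in `F`. -/
def fcount (F : Set (Finset (Euc N))) (k : ℕ) : ℕ :=
  {s ∈ F | s.card = k + 1}.ncard

/-- The combinatorial Euler characteristic `χ(F) = Σ_k (-1)^k f_k(F)`. -/
def eulerChar (F : Set (Finset (Euc N))) : ℤ :=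
  ∑ᶠ k : ℕ, (-1 : ℤ) ^ k * fcount F k

/-- The link of `η` in `K`: all simplices `ω` of `K` disjoint from `η` such
that the join `η ∗ ω` is a simplex of `K`. -/
def linkFaces (K : SimplicialComplex ℝ (Euc N)) (η : Finset (Euc N)) :
    Set (Finset (Euc N)) :=
  {ω | ω ∈ K.faces ∧ Disjoint η ω ∧ η ∪ ω ∈ K.faces}

/-- `K` is an `n`-dimensional simplicial complex. -/
def IsNDim (n : ℕ) (K : SimplicialComplex ℝ (Euc N)) : Prop :=
  (∀ s ∈ K.faces, s.card ≤ n + 1) ∧ ∃ s ∈ K.faces, s.card = n + 1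

/-- `L` is a subdivision of `K`: same underlying space, and every open simplex
of `L` is contained in an open simplex of `K`. -/
def IsSubdivision (K L : SimplicialComplex ℝ (Euc N)) : Prop :=
  L.space = K.space ∧ ∀ s ∈ L.faces, ∃ t ∈ K.faces, openSimplex s ⊆ openSimplex t

/-!
Extend the barycentric coordinates `l i` of `σ` to the whole space by orthogonal projection. Near
the centroid of a face `η`, the cylinder over `σ` is a translate of the cone `C η` cut out by the
half-spaces `0 ≤ (l i).linear`, `i ∈ σ \ η`, so `α(η, σ)` is the fraction of the unit ball lying in
`C η`. The reflection `x ↦ -x` preserves the ball and carries `C τ`, up to a null set, to the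
intersection of the complements of the half-spaces defining it. Inclusion–exclusion over subsets of
`σ \ τ` then gives `α(τ, σ) = ∑ (-1) ^ #(σ \ η) * α(η, σ)`, the sum being over all faces
`τ ⊆ η ⊆ σ`. If `#(σ \ τ)` is odd, the term `η = τ` equals `-α(τ, σ)`.
-/

open scoped Pointwise ProbabilityTheory Finset

section PolyhedralCone

variable {ι X E : Type*}

theorem measureReal_biInter_compl_eq_sum_powerset [MeasurableSpace X] {μ : Measure X}
    [IsFiniteMeasure μ] {S : Finset ι} {H : ι → Set X} (hH : ∀ i ∈ S, MeasurableSet (H i)) :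
    μ.real (⋂ i ∈ S, (H i)ᶜ) = ∑ T ∈ S.powerset, (-1) ^ #T * μ.real (⋂ i ∈ T, H i) := by
  have hunion : MeasurableSet (⋃ i ∈ S, H i) := S.measurableSet_biUnion hH
  have hempty : ∑ T ∈ S.powerset with ¬T.Nonempty, (-1) ^ #T * μ.real (⋂ i ∈ T, H i) =
      μ.real Set.univ := by
    simp [Finset.not_nonempty_iff_eq_empty, Finset.filter_eq']
  simp_rw [← Set.compl_iUnion]
  rw [measureReal_compl hunion, measureReal_biUnion_eq_sum_powerset hH,
    ← Finset.sum_filter_add_sum_filter_not S.powerset Finset.Nonempty fun T => (-1) ^ #T * _,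
    hempty, sub_eq_neg_add, ← Finset.sum_neg_distrib]
  simp only [pow_succ, mul_neg_one, neg_mul, neg_neg]

/-- The polyhedral cone cut out by the half-spaces `0 ≤ f j`, `j ∈ S`. Its translate to a
point of a polyhedron is the tangent cone there when `S` indexes the constraints active at it. -/
def polyhedralCone [AddCommGroup E] [Module ℝ E] (f : ι → Module.Dual ℝ E) (S : Finset ι) :
    Set E :=
  ⋂ j ∈ S, {x | 0 ≤ f j x}

theorem mem_polyhedralCone [AddCommGroup E] [Module ℝ E] {f : ι → Module.Dual ℝ E}
    {S : Finset ι} {x : E} : x ∈ polyhedralCone f S ↔ ∀ j ∈ S, 0 ≤ f j x := by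
  simp only [polyhedralCone, Set.mem_iInter, Set.mem_ofPred_eq]

theorem smul_polyhedralCone [AddCommGroup E] [Module ℝ E] (f : ι → Module.Dual ℝ E)
    (S : Finset ι) {r : ℝ} (hr : 0 < r) : r • polyhedralCone f S = polyhedralCone f S := by
  ext x
  simp only [Set.mem_smul_set_iff_inv_smul_mem₀ hr.ne', mem_polyhedralCone, map_smul, smul_eq_mul,
    mul_nonneg_iff_of_pos_left (inv_pos.2 hr)]

theorem measureReal_polyhedralCone_eq_sum_powerset [AddCommGroup E] [Module ℝ E]
    [MeasurableSpace E] [MeasurableNeg E] {ν : Measure E} [IsFiniteMeasure ν] [ν.IsNegInvariant]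
    {f : ι → Module.Dual ℝ E} {S : Finset ι} (hf : ∀ j ∈ S, Measurable (f j))
    (hne : ∀ j ∈ S, ∀ᵐ x ∂ν, f j x ≠ 0) :
    ν.real (polyhedralCone f S) = ∑ T ∈ S.powerset, (-1) ^ #T * ν.real (polyhedralCone f T) := by
  have hneg : (-polyhedralCone f S : Set E) =ᵐ[ν] ⋂ j ∈ S, {x | 0 ≤ f j x}ᶜ := by
    filter_upwards [(Filter.eventually_all_finset S).2 hne] with x hx
    refine propext ?_
    change -x ∈ polyhedralCone f S ↔ x ∈ ⋂ j ∈ S, {x | 0 ≤ f j x}ᶜ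
    simp only [mem_polyhedralCone, Set.mem_iInter, Set.mem_compl_iff, Set.mem_ofPred_eq, not_le,
      map_neg, neg_nonneg]
    exact forall₂_congr fun j hj => ⟨fun h => h.lt_of_ne (hx j hj), le_of_lt⟩
  calc ν.real (polyhedralCone f S)
      = ν.real (-polyhedralCone f S) := by simp only [measureReal_def, Measure.measure_neg]
    _ = ν.real (⋂ j ∈ S, {x | 0 ≤ f j x}ᶜ) := measureReal_congr hneg
    _ = ∑ T ∈ S.powerset, (-1) ^ #T * ν.real (polyhedralCone f T) :=
      measureReal_biInter_compl_eq_sum_powerset fun j hj => hf j hj measurableSet_Ici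

theorem isNegInvariant_cond [InvolutiveNeg X] [MeasurableSpace X] [MeasurableNeg X]
    {μ : Measure X} [μ.IsNegInvariant] {s : Set X} (hs : MeasurableSet s) (hneg : -s = s) :
    (μ[|s]).IsNegInvariant := by
  refine ⟨Measure.ext fun t _ => ?_⟩
  have hst : s ∩ -t = -(s ∩ t) := by rw [Set.inter_neg, hneg]
  rw [Measure.neg_apply, ProbabilityTheory.cond_apply hs, ProbabilityTheory.cond_apply hs, hst,
    Measure.measure_neg]

end PolyhedralCone

section TangentCone

variable {ι E : Type*} [NormedAddCommGroup E] [NormedSpace ℝ E] [FiniteDimensional ℝ E]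

theorem eventuallyEq_vadd_polyhedralCone {S : Finset ι} (l : ι → E →ᵃ[ℝ] ℝ) {c : E}
    (hc : ∀ j ∈ S, 0 ≤ l j c) :
    {y | ∀ j ∈ S, 0 ≤ l j y} =ᶠ[nhds c]
      c +ᵥ polyhedralCone (fun j => (l j).linear) {j ∈ S | l j c = 0} := by
  have hpos : ∀ᶠ y in nhds c, ∀ j ∈ S, l j c ≠ 0 → 0 < l j y := by
    refine (Filter.eventually_all_finset S).2 fun j hj => Filter.eventually_imp_distrib_left.2 ?_
    exact fun h => (l j).continuous_of_finiteDimensional.continuousAt.eventually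
      (lt_mem_nhds ((hc j hj).lt_of_ne' h))
  filter_upwards [hpos] with y hy
  have hlin : ∀ j, l j c = 0 → (l j).linear (-c + y) = l j y := fun j hj => by
    rw [neg_add_eq_sub, ← vsub_eq_sub, AffineMap.linearMap_vsub, hj, vsub_eq_sub, sub_zero]
  refine propext ?_
  change (∀ j ∈ S, 0 ≤ l j y) ↔
    y ∈ c +ᵥ polyhedralCone (fun j => (l j).linear) {j ∈ S | l j c = 0}
  simp only [Set.mem_vadd_set_iff_neg_vadd_mem, vadd_eq_add, mem_polyhedralCone,
    Finset.mem_filter]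
  constructor
  · rintro h j ⟨hj, hj0⟩
    exact (hlin j hj0).symm ▸ h j hj
  · intro h j hj
    by_cases hj0 : l j c = 0
    · exact hlin j hj0 ▸ h j ⟨hj, hj0⟩
    · exact (hy j hj hj0).le

variable [MeasurableSpace E] [BorelSpace E] (μ : Measure E) [μ.IsAddHaarMeasure]

theorem cond_ball_vadd {K : Set E} (hK : ∀ r : ℝ, 0 < r → r • K = K) (c : E) {ε : ℝ}
    (hε : 0 < ε) : μ[|Metric.ball c ε] (c +ᵥ K) = μ[|Metric.ball 0 1] K := by
  have hball : Metric.ball c ε = c +ᵥ ε • Metric.ball (0 : E) 1 := by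
    rw [smul_unitBall_of_pos hε, Metric.vadd_ball, vadd_eq_add, add_zero]
  have hinter : Metric.ball c ε ∩ (c +ᵥ K) = c +ᵥ ε • (Metric.ball (0 : E) 1 ∩ K) := by
    rw [Set.smul_set_inter₀ hε.ne', hK ε hε, Set.vadd_set_inter, hball]
  rw [ProbabilityTheory.cond_apply Metric.isOpen_ball.measurableSet,
    ProbabilityTheory.cond_apply Metric.isOpen_ball.measurableSet, hinter, hball, measure_vadd,
    measure_vadd, Measure.addHaar_smul, Measure.addHaar_smul]
  have hpos : ENNReal.ofReal |ε ^ Module.finrank ℝ E| ≠ 0 := by positivity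
  rw [← ENNReal.div_eq_inv_mul, ENNReal.mul_div_mul_left _ _ hpos ENNReal.ofReal_ne_top,
    ENNReal.div_eq_inv_mul]

theorem tendsto_cond_ball_of_eventuallyEq_vadd {P K : Set E}
    (hK : ∀ r : ℝ, 0 < r → r • K = K) {c : E} (hPK : P =ᶠ[nhds c] (c +ᵥ K : Set E)) :
    Tendsto (fun ε => (μ[|Metric.ball c ε]).real P) (nhdsWithin 0 (Set.Ioi 0))
      (nhds ((μ[|Metric.ball 0 1]).real K)) := by
  obtain ⟨δ, hδ, hδPK⟩ := Metric.eventually_nhds_iff_ball.1 hPK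
  refine tendsto_nhds_of_eventually_eq ?_
  filter_upwards [Ioo_mem_nhdsGT hδ] with ε ⟨hε, hεδ⟩
  have hae : P =ᵐ[μ[|Metric.ball c ε]] (c +ᵥ K : Set E) :=
    ProbabilityTheory.ae_cond_of_forall_mem Metric.isOpen_ball.measurableSet
      fun y hy => hδPK y (Metric.ball_subset_ball hεδ.le hy)
  rw [measureReal_congr hae, measureReal_def, cond_ball_vadd μ hK c hε, measureReal_def]

end TangentCone

section Barycentric

/-- The affine functions `l j`, `j ∈ σ`, restrict to the barycentric coordinates on the affine span
of `σ`. They are indexed by all points, but their values are only constrained for `j ∈ σ`. -/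
def IsBarycentric {k V P : Type*} [Ring k] [AddCommGroup V] [Module k V] [AddTorsor V P]
    [DecidableEq P] (σ : Finset P) (l : P → P →ᵃ[k] k) : Prop :=
  ∀ i ∈ σ, ∀ j ∈ σ, l i j = if i = j then 1 else 0

namespace IsBarycentric

theorem exists_of_affineIndependent {k V P : Type*} [DivisionRing k] [AddCommGroup V] [Module k V]
    [AddTorsor V P] [DecidableEq P] {σ : Finset P} (hσ : AffineIndependent k ((↑) : σ → P)) :
    ∃ l : P → P →ᵃ[k] k, IsBarycentric σ l := by
  obtain ⟨t, hσt, ht, htop⟩ := exists_subset_affineIndependent_affineSpan_eq_top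
    (s := (σ : Set P)) hσ
  let b : AffineBasis t k P := ⟨(↑), ht, by rwa [Subtype.range_coe]⟩
  refine ⟨fun i => if hi : i ∈ t then b.coord ⟨i, hi⟩ else AffineMap.const k P 0,
    fun i hi j hj => ?_⟩
  have hbj : b ⟨j, hσt hj⟩ = j := rfl
  simp only [dif_pos (hσt hi)]
  conv_lhs => rw [← hbj, b.coord_apply]
  simp only [Subtype.mk.injEq]

theorem linear_ne_zero {k V P : Type*} [Ring k] [Nontrivial k] [AddCommGroup V] [Module k V]
    [AddTorsor V P] [DecidableEq P] {σ : Finset P} {l : P → P →ᵃ[k] k} (hl : IsBarycentric σ l)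
    {i j : P} (hi : i ∈ σ) (hj : j ∈ σ) (hij : i ≠ j) : (l i).linear ≠ 0 := by
  intro h
  have hdiff := (l i).linearMap_vsub i j
  rw [h, hl i hi i hi, hl i hi j hj, if_pos rfl, if_neg hij] at hdiff
  simp at hdiff

theorem apply_centroid {k V P : Type*} [Field k] [CharZero k] [AddCommGroup V] [Module k V]
    [AddTorsor V P] [DecidableEq P] {σ η : Finset P} {l : P → P →ᵃ[k] k}
    (hl : IsBarycentric σ l) (hη : η ⊆ σ) (hne : η.Nonempty) {i : P} (hi : i ∈ σ) :
    l i (η.centroid k id) = if i ∈ η then (#η : k)⁻¹ else 0 := by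
  have hw : ∑ j ∈ η, η.centroidWeights k j = 1 := η.sum_centroidWeights_eq_one_of_nonempty k hne
  rw [Finset.centroid_def, Finset.map_affineCombination _ _ _ hw,
    Finset.affineCombination_eq_linear_combination _ _ _ hw]
  simp only [Finset.centroidWeights_apply, Function.comp_apply, id_eq, smul_eq_mul]
  rw [Finset.sum_congr rfl fun j hj => by rw [hl i hi j (hη hj), mul_ite, mul_one, mul_zero],
    Finset.sum_ite_eq]

theorem mem_convexHull_iff {k E : Type*} [Field k] [LinearOrder k] [IsStrictOrderedRing k]
    [AddCommGroup E] [Module k E] [DecidableEq E] {σ : Finset E} {l : E → E →ᵃ[k] k}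
    (hl : IsBarycentric σ l) {y : E} (hy : y ∈ affineSpan k (σ : Set E)) :
    y ∈ convexHull k (σ : Set E) ↔ ∀ i ∈ σ, 0 ≤ l i y := by
  constructor
  · intro hyσ i hi
    refine convexHull_min (fun j hj => ?_) ((convex_Ici (0 : k)).affine_preimage (l i)) hyσ
    rw [Set.mem_preimage, Set.mem_Ici, hl i hi j hj]
    split_ifs <;> simp
  · intro hpos
    obtain ⟨w, hw, rfl⟩ := eq_affineCombination_of_mem_affineSpan_of_fintype
      (p := ((↑) : σ → E)) (by rwa [Subtype.range_coe])
    have hcoord : ∀ i : σ, l i (Finset.univ.affineCombination k ((↑) : σ → E) w) = w i := by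
      intro i
      rw [Finset.map_affineCombination _ _ _ hw,
        Finset.affineCombination_eq_linear_combination _ _ _ hw]
      simp [hl i i.2]
    have hmem := affineCombination_mem_convexHull (v := ((↑) : σ → E))
      (fun i _ => hcoord i ▸ hpos i i.2) hw
    rwa [Subtype.range_coe] at hmem

end IsBarycentric

end Barycentric

section Cylinder

variable {E : Type*} [NormedAddCommGroup E] [InnerProductSpace ℝ E]

/-- The convex hull of `s` thickened in all directions orthogonal to the affine span of `s`, as
in the definition of `solidAngle`. -/
def orthogonalCylinder (s : Set E) : Set E :=
  {y | ∃ c ∈ convexHull ℝ s, ∃ w ∈ (vectorSpan ℝ s)ᗮ, y = c + w}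

theorem mem_orthogonalCylinder_iff {s : Set E} [Nonempty (affineSpan ℝ s)]
    [(affineSpan ℝ s).direction.HasOrthogonalProjection] {y : E} :
    y ∈ orthogonalCylinder s ↔
      (EuclideanGeometry.orthogonalProjection (affineSpan ℝ s) y : E) ∈ convexHull ℝ s := by
  constructor
  · rintro ⟨c, hc, w, hw, rfl⟩
    rw [← direction_affineSpan] at hw
    rwa [add_comm, ← vadd_eq_add, EuclideanGeometry.orthogonalProjection_vadd_eq_self
      (convexHull_subset_affineSpan s hc) hw]
  · intro hy
    refine ⟨_, hy, y - EuclideanGeometry.orthogonalProjection (affineSpan ℝ s) y, ?_, by simp⟩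
    rw [← direction_affineSpan]
    exact EuclideanGeometry.vsub_orthogonalProjection_mem_direction_orthogonal _ y

theorem exists_isBarycentric_orthogonalCylinder_eq [DecidableEq E] {σ : Finset E} (hne : σ.Nonempty)
    (hσ : AffineIndependent ℝ ((↑) : σ → E)) :
    ∃ l : E → E →ᵃ[ℝ] ℝ, IsBarycentric σ l ∧
      orthogonalCylinder (σ : Set E) = {y | ∀ i ∈ σ, 0 ≤ l i y} := by
  obtain ⟨m, hm⟩ := IsBarycentric.exists_of_affineIndependent hσ
  have : Nonempty (affineSpan ℝ (σ : Set E)) := ((affineSpan_nonempty ℝ).2 hne).to_subtype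
  have : FiniteDimensional ℝ (affineSpan ℝ (σ : Set E)).direction :=
    finiteDimensional_direction_affineSpan_of_finite ℝ σ.finite_toSet
  let proj : E →ᵃ[ℝ] E := (affineSpan ℝ (σ : Set E)).subtype.comp
    (EuclideanGeometry.orthogonalProjection (affineSpan ℝ (σ : Set E))).toAffineMap
  have hproj : ∀ j ∈ σ, proj j = j := fun j hj =>
    EuclideanGeometry.orthogonalProjection_eq_self_iff.2 (subset_affineSpan ℝ _ hj)
  refine ⟨fun i => (m i).comp proj, fun i hi j hj => ?_, Set.ext fun y => ?_⟩
  · rw [AffineMap.comp_apply, hproj j hj, hm i hi j hj]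
  · exact mem_orthogonalCylinder_iff.trans (hm.mem_convexHull_iff
      (EuclideanGeometry.orthogonalProjection (affineSpan ℝ (σ : Set E)) y).2)

end Cylinder

section SolidAngle

theorem solidAngle_eq_limUnder_cond_ball (η σ : Finset (Euc N)) :
    solidAngle η σ = limUnder (nhdsWithin (0 : ℝ) (Set.Ioi 0)) fun ε =>
      (volume[|Metric.ball (η.centroid ℝ id) ε]).real (orthogonalCylinder (σ : Set (Euc N))) := by
  simp only [solidAngle, measureReal_def, ProbabilityTheory.cond_apply
    Metric.isOpen_ball.measurableSet, ENNReal.toReal_mul, ENNReal.toReal_inv, div_eq_inv_mul]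
  rfl

theorem solidAngle_eq_cond_ball_polyhedralCone {σ η : Finset (Euc N)}
    {l : Euc N → Euc N →ᵃ[ℝ] ℝ} (hl : IsBarycentric σ l)
    (hcyl : orthogonalCylinder (σ : Set (Euc N)) = {y | ∀ i ∈ σ, 0 ≤ l i y})
    (hη : η ⊆ σ) (hne : η.Nonempty) :
    solidAngle η σ = (volume[|Metric.ball (0 : Euc N) 1]).real
      (polyhedralCone (fun i => (l i).linear) (σ \ η)) := by
  have hcentroid : ∀ i ∈ σ, l i (η.centroid ℝ id) = if i ∈ η then (#η : ℝ)⁻¹ else 0 :=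
    fun i hi => hl.apply_centroid hη hne hi
  have hnonneg : ∀ i ∈ σ, 0 ≤ l i (η.centroid ℝ id) := fun i hi => by
    rw [hcentroid i hi]; positivity
  have hactive : {i ∈ σ | l i (η.centroid ℝ id) = 0} = σ \ η := by
    rw [Finset.sdiff_eq_filter]
    refine Finset.filter_congr fun i hi => ?_
    simp [hcentroid i hi, hne.ne_empty]
  have hgerm := eventuallyEq_vadd_polyhedralCone l hnonneg
  rw [hactive, ← hcyl] at hgerm
  rw [solidAngle_eq_limUnder_cond_ball]
  exact (tendsto_cond_ball_of_eventuallyEq_vadd volume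
    (fun _ => smul_polyhedralCone _ _) hgerm).limUnder_eq

theorem sum_powerset_sdiff_eq_sum_Icc {α M : Type*} [DecidableEq α] [AddCommMonoid M]
    {σ τ : Finset α} (hτ : τ ⊆ σ) (f : Finset α → M) :
    ∑ T ∈ (σ \ τ).powerset, f T = ∑ η ∈ Finset.Icc τ σ, f (σ \ η) := by
  have hsub : ∀ T ∈ (σ \ τ).powerset, T ⊆ σ := fun T hT =>
    (Finset.mem_powerset.1 hT).trans Finset.sdiff_subset
  refine Finset.sum_nbij' (σ \ ·) (σ \ ·) (fun T hT => ?_) (fun η hη => ?_)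
    (fun T hT => Finset.sdiff_sdiff_eq_self (hsub T hT))
    (fun η hη => Finset.sdiff_sdiff_eq_self (Finset.mem_Icc.1 hη).2)
    (fun T hT => by rw [Finset.sdiff_sdiff_eq_self (hsub T hT)])
  · exact Finset.mem_Icc.2 ⟨Finset.subset_sdiff.2 ⟨hτ, Finset.disjoint_of_subset_right
      (Finset.mem_powerset.1 hT) Finset.disjoint_sdiff⟩, Finset.sdiff_subset⟩
  · exact Finset.mem_powerset.2 (Finset.sdiff_subset_sdiff le_rfl (Finset.mem_Icc.1 hη).1)

theorem solidAngle_eq_sum_Icc {σ τ : Finset (Euc N)}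
    (hσ : AffineIndependent ℝ ((↑) : σ → Euc N)) (hτ : τ ⊆ σ) (hne : τ.Nonempty) :
    solidAngle τ σ = ∑ η ∈ Finset.Icc τ σ, (-1) ^ #(σ \ η) * solidAngle η σ := by
  obtain ⟨l, hl, hcyl⟩ := exists_isBarycentric_orthogonalCylinder_eq (hne.mono hτ) hσ
  have hangle : ∀ η, τ ⊆ η → η ⊆ σ → solidAngle η σ =
      (volume[|Metric.ball (0 : Euc N) 1]).real
        (polyhedralCone (fun i => (l i).linear) (σ \ η)) := fun η hτη hη =>
    solidAngle_eq_cond_ball_polyhedralCone hl hcyl hη (hne.mono hτη)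
  have hlin : ∀ i ∈ σ \ τ, (l i).linear ≠ 0 := by
    intro i hi
    obtain ⟨hiσ, hiτ⟩ := Finset.mem_sdiff.1 hi
    obtain ⟨j, hj⟩ := hne
    exact hl.linear_ne_zero hiσ (hτ hj) (ne_of_mem_of_not_mem hj hiτ).symm
  have hnull : ∀ i ∈ σ \ τ, ∀ᵐ x ∂volume[|Metric.ball (0 : Euc N) 1], (l i).linear x ≠ 0 :=
    fun i hi => ProbabilityTheory.cond_absolutelyContinuous.ae_le <| measure_eq_zero_iff_ae_notMem.1
      (Measure.addHaar_submodule _ (LinearMap.ker (l i).linear)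
        (LinearMap.ker_eq_top.not.2 (hlin i hi)))
  have : (volume[|Metric.ball (0 : Euc N) 1]).IsNegInvariant :=
    isNegInvariant_cond Metric.isOpen_ball.measurableSet (by rw [neg_ball, neg_zero])
  rw [hangle τ le_rfl hτ, measureReal_polyhedralCone_eq_sum_powerset
    (fun i _ => (l i).linear.continuous_of_finiteDimensional.measurable) hnull,
    sum_powerset_sdiff_eq_sum_Icc hτ]
  refine Finset.sum_congr rfl fun η hη => ?_
  rw [hangle η (Finset.mem_Icc.1 hη).1 (Finset.mem_Icc.1 hη).2]

theorem sum_Ioc_mul_solidAngle_eq_two_mul {σ τ : Finset (Euc N)}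
    (hσ : AffineIndependent ℝ ((↑) : σ → Euc N)) (hτ : τ ⊆ σ) (hne : τ.Nonempty)
    (hodd : Odd #(σ \ τ)) :
    ∑ η ∈ Finset.Ioc τ σ, (-1) ^ #(σ \ η) * solidAngle η σ = 2 * solidAngle τ σ := by
  have hsum := solidAngle_eq_sum_Icc hσ hτ hne
  rw [← Finset.add_sum_Ioc_eq_sum_Icc hτ, hodd.neg_one_pow] at hsum
  linarith

theorem sum_Ioc_eq_sum_finsum_card {α M : Type*} [DecidableEq α] [AddCommMonoid M] {n p : ℕ}
    {σ τ : Finset α} (hσ : #σ = n + 1) (hτ : #τ = p + 1) (f : Finset α → M) :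
    ∑ η ∈ Finset.Ioc τ σ, f η =
      ∑ i ∈ Finset.Icc (p + 1) n, ∑ᶠ η ∈ {η | η ⊆ σ ∧ #η = i + 1 ∧ τ ⊆ η}, f η := by
  have hmaps : ∀ η ∈ Finset.Ioc τ σ, #η - 1 ∈ Finset.Icc (p + 1) n := fun η hη => by
    obtain ⟨hτη, hησ⟩ := Finset.mem_Ioc.1 hη
    have hlt := Finset.card_lt_card hτη
    have hle := Finset.card_le_card hησ
    exact Finset.mem_Icc.2 (by omega)
  rw [← Finset.sum_fiberwise_of_maps_to hmaps]
  refine Finset.sum_congr rfl fun i hi => ?_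
  rw [← finsum_mem_coe_finset]
  refine finsum_mem_congr (Set.ext fun η => ?_) fun _ _ => rfl
  simp only [Finset.coe_filter, Finset.mem_Ioc, Set.mem_ofPred_eq]
  have hi' := (Finset.mem_Icc.1 hi).1
  constructor
  · rintro ⟨⟨hτη, hησ⟩, hcard⟩
    have hlt := Finset.card_lt_card hτη
    exact ⟨hησ, by omega, hτη.subset⟩
  · rintro ⟨hησ, hcard, hτη⟩
    have hne : τ ≠ η := fun h => by rw [← h] at hcard; omega
    exact ⟨⟨hτη.ssubset_of_ne hne, hησ⟩, by omega⟩

theorem angle_sum_simplex'_general {n p : ℕ} (hodd : Odd (n - p)) (σ τ : Finset (Euc N))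
    (hind : AffineIndependent ℝ ((↑) : σ → Euc N)) (hσcard : #σ = n + 1)
    (hτ : τ ⊆ σ) (hτcard : #τ = p + 1) :
    ∑ i ∈ Finset.Icc (p + 1) n, (-1 : ℝ) ^ (i - p + 1) *
        ∑ᶠ η ∈ {η : Finset (Euc N) | η ⊆ σ ∧ #η = i + 1 ∧ τ ⊆ η}, solidAngle η σ =
      2 * solidAngle τ σ := by
  have hcodim : #(σ \ τ) = n - p := by rw [Finset.card_sdiff_of_subset hτ]; omega
  rw [← sum_Ioc_mul_solidAngle_eq_two_mul hind hτ (Finset.card_pos.1 (by omega))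
    (hcodim ▸ hodd), sum_Ioc_eq_sum_finsum_card hσcard hτcard]
  refine Finset.sum_congr rfl fun i hi => ?_
  rw [mul_finsum_mem]
  refine finsum_mem_congr rfl fun η ⟨hησ, hηcard, _⟩ => ?_
  have hsign : Even (i - p + 1) ↔ Even #(σ \ η) := by
    rw [Finset.card_sdiff_of_subset hησ, hσcard, hηcard]
    have := Finset.mem_Icc.1 hi
    grind
  rw [neg_one_pow_congr hsign]

end SolidAngle

/-- For an `n`-simplex `σ` in Euclidean space (`n` odd, `n ≥ 3`) and an (even)
`p`-face `τ` of `σ` with `0 ≤ p ≤ n-2`,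
`Σ_{i=p+1}^{n} (-1)^{i-p+1} Σ_{σ ≻ η^i ≻ τ} α(η^i, σ) = 2 α(τ, σ)`. -/
theorem angle_sum_simplex' {N n p : ℕ} (hn : 3 ≤ n) (hodd : Odd n) (hpeven : Even p)
    (hp : p ≤ n - 2) (σ τ : Finset (Euc N))
    (hind : AffineIndependent ℝ ((↑) : σ → Euc N)) (hσcard : σ.card = n + 1)
    (hτ : τ ⊆ σ) (hτcard : τ.card = p + 1) :
    ∑ i ∈ Finset.Icc (p + 1) n, (-1 : ℝ) ^ (i - p + 1) *
        ∑ᶠ η ∈ {η : Finset (Euc N) | η ⊆ σ ∧ η.card = i + 1 ∧ τ ⊆ η},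
          solidAngle η σ =
      2 * solidAngle τ σ :=
  angle_sum_simplex'_general (Nat.Odd.sub_even (by omega) hodd hpeven) σ τ hind hσcard hτ hτcard

end AngleDefectPaper
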